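/- Assume in addition that |x·g'(x)| ≤ C₂|g(x)| and |x·f'(x)| ≤ C₃ for all x ≤ −3/2, for some constants C₂, C₃ > 0. Then there exists a constant c > 0, uniform in λ ≥ 1, such that for every u in the Schwartz space 𝒮(ℝ, ℂ⁴): ‖Γ¹R₋'Du − (i/2)Γ¹R₋''u − λR₋g'Γ²u − R₋f'u‖ ≤ c(‖H₀u‖ + ‖u‖). (The operator on the left-hand side is the commutator i[H₀, A₋] computed on Schwartz functions, so i[H₀, A₋] extends uniquely to a bounded operator from D(H₀) to L²(ℝ, ℂ⁴).) -/

import Mathlib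

noncomputable section

open MeasureTheory

abbrev V4 : Type := EuclideanSpace ℂ (Fin 4)

/-- A `4 × 4` complex matrix acting on `ℂ⁴` as a continuous linear map. -/
def Mop (A : Matrix (Fin 4) (Fin 4) ℂ) : V4 →L[ℂ] V4 := Matrix.toEuclideanCLM (𝕜 := ℂ) A

/-- The `L²` inner product `⟨u, v⟩ = ∫ ⟨u(x), v(x)⟩ dx` (conjugate-linear in the first slot). -/
def L2inner (u v : ℝ → V4) : ℂ := ∫ x : ℝ, (inner ℂ (u x) (v x) : ℂ)

/-- The `L²` norm `‖u‖ = (∫ ‖u(x)‖² dx)^{1/2}`. -/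
def L2norm (u : ℝ → V4) : ℝ := Real.sqrt (∫ x : ℝ, ‖u x‖ ^ 2)

/-- The operator `D = −i d/dx`. -/
def Dop (u : ℝ → V4) : ℝ → V4 := fun x => (-Complex.I) • deriv u x

/-- The per-mode free Dirac Hamiltonian `H₀u = Γ¹Du + λgΓ²u + fu`. -/
def H0op (Γ1 Γ2 : Matrix (Fin 4) (Fin 4) ℂ) (g f : ℝ → ℝ) (lam : ℝ) (u : ℝ → V4) : ℝ → V4 :=
  fun x => Mop Γ1 (Dop u x) + (lam * g x) • Mop Γ2 (u x) + f x • u x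

/-- The operator `Qu = −u'' + λ²g²u`. -/
def Qop (g : ℝ → ℝ) (lam : ℝ) (u : ℝ → V4) : ℝ → V4 :=
  fun x => -(deriv (deriv u) x) + (lam ^ 2 * g x ^ 2) • u x

/-- The comparison operator `Nu = Qu + (1 + x²)u`. -/
def Nop (g : ℝ → ℝ) (lam : ℝ) (u : ℝ → V4) : ℝ → V4 :=
  fun x => Qop g lam u x + (1 + x ^ 2) • u x

/-- The coefficient `R₋(x) = j₋(x/S)² · x` of the conjugate operator at the double horizon. -/
def Rm (jm : ℝ → ℝ) (S : ℝ) (x : ℝ) : ℝ := (jm (x / S)) ^ 2 * x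

/-- The conjugate operator at the double horizon, `A₋u = R₋Du − (i/2)R₋'u = ½{R₋, D}u`. -/
def Amop (jm : ℝ → ℝ) (S : ℝ) (u : ℝ → V4) : ℝ → V4 :=
  fun x => Rm jm S x • Dop u x - ((Complex.I / 2) * ((deriv (Rm jm S) x : ℝ) : ℂ)) • u x

/-- The commutator `i[H₀, A₋] = Γ¹R₋'D − (i/2)Γ¹R₋'' − λR₋g'Γ² − R₋f'` computed on
Schwartz functions. -/
def iCommH0Am (Γ1 Γ2 : Matrix (Fin 4) (Fin 4) ℂ) (g f : ℝ → ℝ) (lam : ℝ)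
    (jm : ℝ → ℝ) (S : ℝ) (u : ℝ → V4) : ℝ → V4 :=
  fun x =>
    deriv (Rm jm S) x • Mop Γ1 (Dop u x)
      - ((Complex.I / 2) * ((deriv (deriv (Rm jm S)) x : ℝ) : ℂ)) • Mop Γ1 (u x)
      - (lam * Rm jm S x * deriv g x) • Mop Γ2 (u x)
      - (Rm jm S x * deriv f x) • u x

lemma Mop_symm {A : Matrix (Fin 4) (Fin 4) ℂ} (hA : A.IsHermitian) (x y : V4) :
    inner ℂ (Mop A x) y = inner ℂ x (Mop A y) := by
  have h : ContinuousLinearMap.adjoint (Mop A) = Mop A := by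
    have h1 : star (Matrix.toEuclideanCLM (𝕜 := ℂ) A) = Matrix.toEuclideanCLM (𝕜 := ℂ) A := by
      rw [← map_star]
      congr 1
    exact h1
  conv_lhs => rw [← h]
  exact ContinuousLinearMap.adjoint_inner_left _ _ _

lemma Mop_comp (A B : Matrix (Fin 4) (Fin 4) ℂ) (x : V4) :
    Mop A (Mop B x) = Mop (A * B) x := by
  unfold Mop
  rw [map_mul]
  rfl

lemma Mop_one_apply (x : V4) : Mop 1 x = x := by
  unfold Mop
  rw [map_one]
  rfl

lemma Mop_norm {A : Matrix (Fin 4) (Fin 4) ℂ} (hA : A.IsHermitian) (hs : A * A = 1) (x : V4) :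
    ‖Mop A x‖ = ‖x‖ := by
  have h : inner ℂ (Mop A x) (Mop A x) = inner ℂ x x := by
    rw [Mop_symm hA, Mop_comp, hs, Mop_one_apply]
  rw [inner_self_eq_norm_sq_to_K, inner_self_eq_norm_sq_to_K] at h
  have h2 : ‖Mop A x‖ ^ 2 = ‖x‖ ^ 2 := by exact_mod_cast h
  exact (sq_eq_sq₀ (norm_nonneg _) (norm_nonneg _)).1 h2

/-- the real bilinear form giving the cross term -/
def Bf (Γ1 Γ2 : Matrix (Fin 4) (Fin 4) ℂ) (v w : V4) : ℝ :=
  (inner ℂ (Mop Γ1 ((-Complex.I) • v)) (Mop Γ2 w) : ℂ).re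

lemma Bf_symm {Γ1 Γ2 : Matrix (Fin 4) (Fin 4) ℂ}
    (h1 : Γ1.IsHermitian) (h2 : Γ2.IsHermitian)
    (ha : Γ1 * Γ2 + Γ2 * Γ1 = 0) (v w : V4) : Bf Γ1 Γ2 v w = Bf Γ1 Γ2 w v := by
  unfold Bf
  have e : ∀ x : V4, Mop Γ2 (Mop Γ1 x) = - Mop Γ1 (Mop Γ2 x) := by
    intro x
    rw [Mop_comp, Mop_comp, eq_neg_of_add_eq_zero_right ha]
    simp [Mop]
  have hr : (inner ℂ (Mop Γ1 ((-Complex.I) • w)) (Mop Γ2 v) : ℂ).re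
      = (inner ℂ (Mop Γ2 v) (Mop Γ1 ((-Complex.I) • w)) : ℂ).re := by
    rw [← inner_conj_symm, Complex.conj_re]
  rw [hr, Mop_symm h1, Mop_symm h2 v, e]
  simp only [map_smul, inner_smul_left, inner_smul_right, inner_neg_right, map_neg,
    Complex.conj_I]
  simp

lemma Bf_abs {Γ1 Γ2 : Matrix (Fin 4) (Fin 4) ℂ}
    (h1 : Γ1.IsHermitian) (h2 : Γ2.IsHermitian) (hs1 : Γ1 * Γ1 = 1) (hs2 : Γ2 * Γ2 = 1)
    (v w : V4) : |Bf Γ1 Γ2 v w| ≤ ‖v‖ * ‖w‖ := by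
  unfold Bf
  refine (Complex.abs_re_le_norm _).trans ((norm_inner_le_norm _ _).trans ?_)
  rw [Mop_norm h1 hs1, Mop_norm h2 hs2, norm_smul]
  simp

lemma Bf_continuous (Γ1 Γ2 : Matrix (Fin 4) (Fin 4) ℂ) {v w : ℝ → V4}
    (hv : Continuous v) (hw : Continuous w) : Continuous (fun x => Bf Γ1 Γ2 (v x) (w x)) := by
  unfold Bf
  fun_prop

lemma Bf_hasDerivAt {Γ1 Γ2 : Matrix (Fin 4) (Fin 4) ℂ}
    (h1 : Γ1.IsHermitian) (h2 : Γ2.IsHermitian)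
    (ha : Γ1 * Γ2 + Γ2 * Γ1 = 0) {u : ℝ → V4} {u' : V4} {x : ℝ} (hu : HasDerivAt u u' x) :
    HasDerivAt (fun y => Bf Γ1 Γ2 (u y) (u y)) (2 * Bf Γ1 Γ2 u' (u x)) x := by
  have hT : HasDerivAt (fun y => Mop Γ1 ((-Complex.I) • u y)) (Mop Γ1 ((-Complex.I) • u')) x :=
    ((Mop Γ1).restrictScalars ℝ).hasFDerivAt.comp_hasDerivAt x (hu.const_smul (-Complex.I))
  have hP : HasDerivAt (fun y => Mop Γ2 (u y)) (Mop Γ2 u') x :=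
    ((Mop Γ2).restrictScalars ℝ).hasFDerivAt.comp_hasDerivAt x hu
  have h := Complex.reCLM.hasFDerivAt.comp_hasDerivAt x (hT.inner ℂ hP)
  have e : 2 * Bf Γ1 Γ2 u' (u x) = Bf Γ1 Γ2 (u x) u' + Bf Γ1 Γ2 u' (u x) := by
    rw [Bf_symm h1 h2 ha (u x) u']; ring
  rw [e]
  exact h

/-- a continuous function constant outside a compact interval is bounded -/
lemma bdd_of_const {φ : ℝ → ℝ} (hφ : Continuous φ) (a b p q : ℝ)
    (hl : ∀ x < a, φ x = p) (hr : ∀ x, b < x → φ x = q) : ∃ K, 0 ≤ K ∧ ∀ x, |φ x| ≤ K := by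
  obtain ⟨K, hK⟩ := (isCompact_Icc (a := a) (b := b)).exists_bound_of_continuousOn hφ.continuousOn
  refine ⟨|K| + |p| + |q|, by positivity, fun x => ?_⟩
  have h1 := abs_nonneg K
  have h2 := abs_nonneg p
  have h3 := abs_nonneg q
  rcases lt_or_ge x a with h | h
  · rw [hl x h]; linarith
  rcases lt_or_ge b x with h' | h'
  · rw [hr x h']; linarith
  · have := hK x ⟨h, h'⟩
    rw [Real.norm_eq_abs] at this
    have := le_abs_self K
    linarith

lemma Rm_deriv_bdd {jm : ℝ → ℝ} {S : ℝ} (hS : 1 ≤ S) (hj : ContDiff ℝ (⊤ : ℕ∞) jm)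
    (hjm_one : ∀ t : ℝ, t ≤ -2 → jm t = 1)
    (hjm_zero : ∀ t : ℝ, -(3 / 2 : ℝ) ≤ t → jm t = 0) :
    (∃ K, 0 ≤ K ∧ ∀ x, |deriv (Rm jm S) x| ≤ K) ∧
    (∃ K, 0 ≤ K ∧ ∀ x, |deriv (deriv (Rm jm S)) x| ≤ K) := by
  have hS0 : 0 < S := by linarith
  have hR : ContDiff ℝ 2 (Rm jm S) := by
    have hj2 : ContDiff ℝ 2 jm := by exact_mod_cast contDiff_infty.1 hj 2
    unfold Rm
    exact ((hj2.comp (contDiff_id.div_const S)).pow 2).mul contDiff_id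
  have hd : ContDiff ℝ 1 (deriv (Rm jm S)) := by
    have : ContDiff ℝ (1 + 1) (Rm jm S) := by simpa [one_add_one_eq_two] using hR
    exact (contDiff_succ_iff_deriv.1 this).2.2
  have hdd : Continuous (deriv (deriv (Rm jm S))) := hd.continuous_deriv le_rfl
  have dl : ∀ x < -2 * S, deriv (Rm jm S) x = 1 := by
    intro x hx
    have : Rm jm S =ᶠ[nhds x] id := by
      filter_upwards [Iio_mem_nhds hx] with y hy
      have : jm (y / S) = 1 := hjm_one _ (by rw [div_le_iff₀ hS0]; exact le_of_lt hy)
      simp [Rm, this]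
    rw [this.deriv_eq]; simp
  have dr : ∀ x, -(3/2) * S < x → deriv (Rm jm S) x = 0 := by
    intro x hx
    have : Rm jm S =ᶠ[nhds x] fun _ => 0 := by
      filter_upwards [Ioi_mem_nhds hx] with y hy
      have : jm (y / S) = 0 := hjm_zero _ (by rw [le_div_iff₀ hS0]; exact le_of_lt hy)
      simp [Rm, this]
    rw [this.deriv_eq]; simp
  refine ⟨bdd_of_const hd.continuous _ _ _ _ dl dr, bdd_of_const hdd (-2 * S) (-(3/2) * S) 0 0 ?_ ?_⟩
  · intro x hx
    have : deriv (Rm jm S) =ᶠ[nhds x] fun _ => 1 := by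
      filter_upwards [Iio_mem_nhds hx] with y hy using dl y hy
    rw [this.deriv_eq]; simp
  · intro x hx
    have : deriv (Rm jm S) =ᶠ[nhds x] fun _ => 0 := by
      filter_upwards [Ioi_mem_nhds hx] with y hy using dr y hy
    rw [this.deriv_eq]; simp

lemma Rm_mul_bdd {jm : ℝ → ℝ} {S : ℝ} (hS : 1 ≤ S)
    (hjm_range : ∀ t : ℝ, jm t ∈ Set.Icc (0 : ℝ) 1)
    (hjm_zero : ∀ t : ℝ, -(3 / 2 : ℝ) ≤ t → jm t = 0) {d C : ℝ} (x : ℝ) (hC : 0 ≤ C)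
    (h : x ≤ -(3 / 2 : ℝ) → |x * d| ≤ C) : |Rm jm S x * d| ≤ C := by
  have hS0 : 0 < S := by linarith
  rcases le_or_gt (-(3 / 2 : ℝ)) (x / S) with h' | h'
  · simpa [Rm, hjm_zero _ h'] using hC
  · rw [div_lt_iff₀ hS0] at h'
    have hx := h (by linarith)
    obtain ⟨h0, h1⟩ := hjm_range (x / S)
    have e : Rm jm S x * d = jm (x / S) ^ 2 * (x * d) := by unfold Rm; ring
    rw [e, abs_mul, abs_of_nonneg (sq_nonneg _)]
    have : jm (x / S) ^ 2 ≤ 1 := pow_le_one₀ h0 h1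
    nlinarith [abs_nonneg (x * d)]

/-- pointwise expansion of the square of the free part -/
lemma free_sq {Γ1 Γ2 : Matrix (Fin 4) (Fin 4) ℂ}
    (h1 : Γ1.IsHermitian) (h2 : Γ2.IsHermitian) (hs1 : Γ1 * Γ1 = 1) (hs2 : Γ2 * Γ2 = 1)
    (v w : V4) (t : ℝ) :
    ‖Mop Γ1 ((-Complex.I) • v) + t • Mop Γ2 w‖ ^ 2
      = ‖v‖ ^ 2 + (t * ‖w‖) ^ 2 + 2 * (t * Bf Γ1 Γ2 v w) := by
  have h := norm_add_sq (𝕜 := ℂ) (Mop Γ1 ((-Complex.I) • v)) (t • Mop Γ2 w)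
  rw [h, norm_smul, Mop_norm h1 hs1, Mop_norm h2 hs2, norm_smul, ← Complex.coe_smul,
    inner_smul_right]
  have : RCLike.re ((t : ℂ) * inner ℂ (Mop Γ1 ((-Complex.I) • v)) (Mop Γ2 w))
      = t * Bf Γ1 Γ2 v w := by
    unfold Bf
    simp
  rw [this]
  simp only [norm_neg, Complex.norm_I, one_mul, Real.norm_eq_abs, mul_pow, sq_abs]
  ring

set_option maxHeartbeats 1000000 in
/-- the commutator `i[H₀, A₋]` is bounded by the graph norm of `H₀`,
uniformly in `λ ≥ 1`: there is `c > 0` with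
`‖Γ¹R₋'Du − (i/2)Γ¹R₋''u − λR₋g'Γ²u − R₋f'u‖ ≤ c(‖H₀u‖ + ‖u‖)` for every Schwartz `u`. -/
theorem commutator_H0_Aminus_bounded
    (Γ1 Γ2 : Matrix (Fin 4) (Fin 4) ℂ)
    (hΓ1_herm : Γ1.IsHermitian) (hΓ2_herm : Γ2.IsHermitian)
    (hΓ1_sq : Γ1 * Γ1 = 1) (hΓ2_sq : Γ2 * Γ2 = 1)
    (hanticomm : Γ1 * Γ2 + Γ2 * Γ1 = 0)
    (g : ℝ → ℝ) (hg_smooth : ContDiff ℝ (⊤ : ℕ∞) g) (Cb : ℝ) (hg_bdd : ∀ x : ℝ, |g x| ≤ Cb)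
    (Cg : ℝ) (hCg : 0 < Cg) (hg' : ∀ x : ℝ, |deriv g x| ≤ Cg * |g x|)
    (f : ℝ → ℝ) (hf_smooth : ContDiff ℝ (⊤ : ℕ∞) f)
    (Mf : ℝ) (hf_bdd : ∀ x : ℝ, |f x| ≤ Mf)
    (Mf' : ℝ) (hf'_bdd : ∀ x : ℝ, |deriv f x| ≤ Mf')
    (S : ℝ) (hS : 1 ≤ S)
    (jm : ℝ → ℝ) (hjm_smooth : ContDiff ℝ (⊤ : ℕ∞) jm)
    (hjm_range : ∀ t : ℝ, jm t ∈ Set.Icc (0 : ℝ) 1)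
    (hjm_one : ∀ t : ℝ, t ≤ -2 → jm t = 1)
    (hjm_zero : ∀ t : ℝ, -(3 / 2 : ℝ) ≤ t → jm t = 0)
    (C2 : ℝ) (hC2 : 0 < C2)
    (hxg' : ∀ x : ℝ, x ≤ -(3 / 2 : ℝ) → |x * deriv g x| ≤ C2 * |g x|)
    (C3 : ℝ) (hC3 : 0 < C3)
    (hxf' : ∀ x : ℝ, x ≤ -(3 / 2 : ℝ) → |x * deriv f x| ≤ C3) :
    ∃ c : ℝ, 0 < c ∧ ∀ (u : SchwartzMap ℝ V4) (lam : ℝ), 1 ≤ lam →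
      L2norm (iCommH0Am Γ1 Γ2 g f lam jm S ⇑u) ≤
        c * (L2norm (H0op Γ1 Γ2 g f lam ⇑u) + L2norm ⇑u) := by
  obtain ⟨⟨K1, hK1, hR1⟩, ⟨K2, hK2, hR2⟩⟩ := Rm_deriv_bdd hS hjm_smooth hjm_one hjm_zero
  set K := K2 / 2 + C3 with hK
  set N := 3 * K1 ^ 2 + 6 * C2 ^ 2 with hN
  set M := 2 * N + N * (2 * Mf ^ 2 + Cg ^ 2 / 2) + 3 * K ^ 2 with hM
  have hN0 : 0 ≤ N := by positivity
  have hM0 : 0 ≤ M := by positivity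
  have hCb0 : 0 ≤ Cb := (abs_nonneg _).trans (hg_bdd 0)
  refine ⟨Real.sqrt M + 1, by positivity, fun u lam hlam => ?_⟩
  have hud : ∀ x, HasDerivAt u (deriv u x) x := fun x => u.differentiableAt.hasDerivAt
  have huc : Continuous u := u.continuous
  have hu'c : Continuous (deriv u) := (SchwartzMap.derivCLM ℝ V4 u).continuous
  have hu2 : Integrable (fun x => ‖u x‖ ^ 2) := (u.memLp 2 volume).integrable_norm_pow two_ne_zero
  have hu'2 : Integrable (fun x => ‖deriv u x‖ ^ 2) :=
    ((SchwartzMap.derivCLM ℝ V4 u).memLp 2 volume).integrable_norm_pow two_ne_zero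
  have hgc : Continuous g := hg_smooth.continuous
  have hfc : Continuous f := hf_smooth.continuous
  have hg'c : Continuous (deriv g) := hg_smooth.continuous_deriv (by simp)
  have hgd : ∀ x, HasDerivAt g (deriv g x) x := fun x =>
    (hg_smooth.differentiable (by simp) x).hasDerivAt
  set F : ℝ → ℝ := fun x => g x * Bf Γ1 Γ2 (u x) (u x) with hF
  set F' : ℝ → ℝ := fun x => deriv g x * Bf Γ1 Γ2 (u x) (u x)
    + g x * (2 * Bf Γ1 Γ2 (deriv u x) (u x)) with hF'
  have hFF' : ∀ x, HasDerivAt F (F' x) x := fun x =>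
    (hgd x).mul (Bf_hasDerivAt hΓ1_herm hΓ2_herm hanticomm (hud x))
  have hBa : ∀ v w, |Bf Γ1 Γ2 v w| ≤ ‖v‖ * ‖w‖ :=
    fun v w => Bf_abs hΓ1_herm hΓ2_herm hΓ1_sq hΓ2_sq v w
  have hBc := Bf_continuous Γ1 Γ2 huc huc
  have hBc' := Bf_continuous Γ1 Γ2 hu'c huc
  have hFi : Integrable F := by
    refine (hu2.const_mul Cb).mono' (hgc.mul hBc).aestronglyMeasurable
      (Filter.Eventually.of_forall fun x => ?_)
    rw [Real.norm_eq_abs, hF, abs_mul, pow_two]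
    exact mul_le_mul (hg_bdd x) (hBa _ _) (abs_nonneg _) hCb0
  have hF'i : Integrable F' := by
    refine ((hu2.const_mul (Cg * Cb)).add ((hu'2.add hu2).const_mul Cb)).mono'
      ((hg'c.mul hBc).add (hgc.mul (hBc'.const_mul 2))).aestronglyMeasurable
      (Filter.Eventually.of_forall fun x => ?_)
    have e1 : |deriv g x * Bf Γ1 Γ2 (u x) (u x)| ≤ Cg * Cb * ‖u x‖ ^ 2 := by
      rw [abs_mul, pow_two]
      refine mul_le_mul ((hg' x).trans ?_) (hBa _ _) (abs_nonneg _) (by positivity)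
      exact mul_le_mul_of_nonneg_left (hg_bdd x) hCg.le
    have e2 : |g x * (2 * Bf Γ1 Γ2 (deriv u x) (u x))| ≤ Cb * (‖deriv u x‖ ^ 2 + ‖u x‖ ^ 2) := by
      rw [abs_mul]
      refine mul_le_mul (hg_bdd x) ?_ (abs_nonneg _) hCb0
      rw [abs_mul, abs_two]
      linarith [hBa (deriv u x) (u x), sq_nonneg (‖deriv u x‖ - ‖u x‖)]
    exact (abs_add_le _ _).trans (add_le_add e1 e2)
  have hF0 : ∫ x, F' x = 0 := integral_eq_zero_of_hasDerivAt_of_integrable hFF' hF'i hFi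
  have hH2 : Integrable (fun x => ‖H0op Γ1 Γ2 g f lam u x‖ ^ 2) := by
    have hc : Continuous (H0op Γ1 Γ2 g f lam u) := by
      unfold H0op Dop
      fun_prop
    refine ((hu'2.const_mul 3).add (hu2.const_mul (3 * (lam * Cb) ^ 2 + 3 * Mf ^ 2))).mono'
      (hc.norm.pow 2).aestronglyMeasurable (Filter.Eventually.of_forall fun x => ?_)
    have e : ‖H0op Γ1 Γ2 g f lam u x‖ ≤ ‖deriv u x‖ + lam * Cb * ‖u x‖ + Mf * ‖u x‖ := by
      unfold H0op Dop
      refine (norm_add₃_le).trans ?_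
      rw [norm_smul, norm_smul, Mop_norm hΓ1_herm hΓ1_sq, Mop_norm hΓ2_herm hΓ2_sq, norm_smul]
      simp only [norm_neg, Complex.norm_I, one_mul, Real.norm_eq_abs]
      rw [abs_mul, abs_of_nonneg (by linarith : (0:ℝ) ≤ lam)]
      gcongr
      · exact hg_bdd x
      · exact hf_bdd x
    rw [Real.norm_eq_abs, abs_of_nonneg (by positivity)]
    have e2 := pow_le_pow_left₀ (norm_nonneg _) e 2
    simp only [Pi.add_apply]
    linarith [sq_nonneg (‖deriv u x‖ - lam * Cb * ‖u x‖), sq_nonneg (‖deriv u x‖ - Mf * ‖u x‖),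
      sq_nonneg (lam * Cb * ‖u x‖ - Mf * ‖u x‖)]
  have key : ∀ x, ‖iCommH0Am Γ1 Γ2 g f lam jm S u x‖ ^ 2 ≤
      M * (‖H0op Γ1 Γ2 g f lam u x‖ ^ 2 + ‖u x‖ ^ 2) - N * lam * F' x := by
    intro x
    have hfree := free_sq hΓ1_herm hΓ2_herm hΓ1_sq hΓ2_sq (deriv u x) (u x) (lam * g x)
    set w := Mop Γ1 ((-Complex.I) • deriv u x) + (lam * g x) • Mop Γ2 (u x) with hw
    set h := ‖H0op Γ1 Γ2 g f lam u x‖ with hh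
    set a := ‖deriv u x‖ with ha
    set c := ‖u x‖ with hc
    have ha0 : 0 ≤ a := norm_nonneg _
    have hc0 : 0 ≤ c := norm_nonneg _
    have hh0 : 0 ≤ h := norm_nonneg _
    set b := lam * |g x| * c with hb
    have hb0 : 0 ≤ b := by positivity
    have hwn : ‖w‖ ≤ h + Mf * c := by
      have e : w = H0op Γ1 Γ2 g f lam u x - f x • u x := by
        simp [H0op, Dop, hw]
      rw [e]
      refine (norm_sub_le _ _).trans ?_
      rw [norm_smul, Real.norm_eq_abs]
      gcongr
      exact hf_bdd x
    have hw2 : ‖w‖ ^ 2 ≤ 2 * h ^ 2 + 2 * Mf ^ 2 * c ^ 2 := by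
      have e2 := pow_le_pow_left₀ (norm_nonneg _) hwn 2
      linarith [sq_nonneg (h - Mf * c)]
    have hb2 : (lam * g x * c) ^ 2 = b ^ 2 := by
      rw [hb, mul_pow, mul_pow, mul_pow, mul_pow, sq_abs]
    have hcross : 2 * (lam * g x * Bf Γ1 Γ2 (deriv u x) (u x))
        = lam * F' x - lam * (deriv g x * Bf Γ1 Γ2 (u x) (u x)) := by
      rw [hF']; ring
    have hgB : lam * (deriv g x * Bf Γ1 Γ2 (u x) (u x)) ≤ Cg * c * b := by
      have e1 : deriv g x * Bf Γ1 Γ2 (u x) (u x) ≤ Cg * |g x| * (c * c) := by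
        refine (le_abs_self _).trans ?_
        rw [abs_mul]
        exact mul_le_mul (hg' x) (hBa _ _) (abs_nonneg _) (by positivity)
      calc _ ≤ lam * (Cg * |g x| * (c * c)) := mul_le_mul_of_nonneg_left e1 (by linarith)
        _ = _ := by rw [hb]; ring
    have hell : a ^ 2 + b ^ 2 / 2 ≤ 2 * h ^ 2 + (2 * Mf ^ 2 + Cg ^ 2 / 2) * c ^ 2 - lam * F' x := by
      rw [hb2, hcross] at hfree
      linarith [sq_nonneg (b - Cg * c)]
    have hcomm : ‖iCommH0Am Γ1 Γ2 g f lam jm S u x‖ ≤ K1 * a + C2 * b + K * c := by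
      have t1 : ‖deriv (Rm jm S) x • Mop Γ1 (Dop u x)‖ ≤ K1 * a := by
        rw [norm_smul, Mop_norm hΓ1_herm hΓ1_sq, Dop, norm_smul]
        simp only [norm_neg, Complex.norm_I, one_mul, Real.norm_eq_abs]
        exact mul_le_mul_of_nonneg_right (hR1 x) ha0
      have t2 : ‖((Complex.I / 2) * ((deriv (deriv (Rm jm S)) x : ℝ) : ℂ)) • Mop Γ1 (u x)‖
          ≤ K2 / 2 * c := by
        rw [norm_smul, Mop_norm hΓ1_herm hΓ1_sq, norm_mul, norm_div, Complex.norm_I,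
          Complex.norm_real, Real.norm_eq_abs, Complex.norm_ofNat]
        have := hR2 x
        refine mul_le_mul_of_nonneg_right ?_ hc0
        linarith
      have t3 : ‖(lam * Rm jm S x * deriv g x) • Mop Γ2 (u x)‖ ≤ C2 * b := by
        rw [norm_smul, Mop_norm hΓ2_herm hΓ2_sq, Real.norm_eq_abs, mul_assoc, abs_mul,
          abs_of_nonneg (by linarith : (0:ℝ) ≤ lam)]
        have := Rm_mul_bdd hS hjm_range hjm_zero (d := deriv g x) (C := C2 * |g x|) x
          (by positivity) (hxg' x)
        calc lam * |Rm jm S x * deriv g x| * c ≤ lam * (C2 * |g x|) * c := by gcongr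
          _ = _ := by rw [hb]; ring
      have t4 : ‖(Rm jm S x * deriv f x) • u x‖ ≤ C3 * c := by
        rw [norm_smul, Real.norm_eq_abs]
        exact mul_le_mul_of_nonneg_right
          (Rm_mul_bdd hS hjm_range hjm_zero x hC3.le (hxf' x)) hc0
      unfold iCommH0Am
      refine (norm_sub_le _ _).trans ?_
      refine (add_le_add_left ((norm_sub_le _ _).trans
        (add_le_add_left (norm_sub_le _ _) _)) _).trans ?_
      rw [hK]
      linarith
    have hsq := pow_le_pow_left₀ (norm_nonneg _) hcomm 2
    have h3 : (K1 * a + C2 * b + K * c) ^ 2 ≤ 3 * K1 ^ 2 * a ^ 2 + 3 * C2 ^ 2 * b ^ 2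
        + 3 * K ^ 2 * c ^ 2 := by
      linarith [sq_nonneg (K1 * a - C2 * b), sq_nonneg (K1 * a - K * c),
        sq_nonneg (C2 * b - K * c)]
    have h4 : 3 * K1 ^ 2 * a ^ 2 + 3 * C2 ^ 2 * b ^ 2 ≤ N * (a ^ 2 + b ^ 2 / 2) := by
      rw [hN]
      linarith [mul_nonneg (sq_nonneg C2) (sq_nonneg a), mul_nonneg (sq_nonneg K1) (sq_nonneg b)]
    have h5 := mul_le_mul_of_nonneg_left hell hN0
    have h6 : 0 ≤ (N * (2 * Mf ^ 2 + Cg ^ 2 / 2) + 3 * K ^ 2) * h ^ 2 := by positivity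
    have h7 : 0 ≤ 2 * N * c ^ 2 := by positivity
    rw [hM]
    linarith
  have hint : ∫ x, ‖iCommH0Am Γ1 Γ2 g f lam jm S u x‖ ^ 2 ≤
      M * ((∫ x, ‖H0op Γ1 Γ2 g f lam u x‖ ^ 2) + ∫ x, ‖u x‖ ^ 2) := by
    have hi1 : Integrable (fun x => M * (‖H0op Γ1 Γ2 g f lam u x‖ ^ 2 + ‖u x‖ ^ 2)) :=
      (hH2.add hu2).const_mul M
    have hi2 : Integrable (fun x => N * lam * F' x) := hF'i.const_mul _
    refine (integral_mono_of_nonneg (Filter.Eventually.of_forall fun x => by positivity)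
      (hi1.sub hi2) (Filter.Eventually.of_forall key)).trans ?_
    rw [← integral_add hH2 hu2, ← integral_const_mul]
    refine (integral_sub hi1 hi2).le.trans ?_
    rw [integral_const_mul (N * lam), hF0]
    simp
  have hP : 0 ≤ ∫ x, ‖H0op Γ1 Γ2 g f lam u x‖ ^ 2 := integral_nonneg fun x => by positivity
  have hQ : 0 ≤ ∫ x, ‖u x‖ ^ 2 := integral_nonneg fun x => by positivity
  unfold L2norm
  refine Real.sqrt_le_iff.2 ⟨by positivity, hint.trans ?_⟩
  generalize (∫ x, ‖H0op Γ1 Γ2 g f lam u x‖ ^ 2) = P at *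
  generalize (∫ x, ‖u x‖ ^ 2) = Q at *
  rw [mul_pow]
  refine mul_le_mul ?_ ?_ (by positivity) (by positivity)
  · nlinarith [Real.sq_sqrt hM0, Real.sqrt_nonneg M]
  · nlinarith [Real.sq_sqrt hP, Real.sq_sqrt hQ, Real.sqrt_nonneg P, Real.sqrt_nonneg Q,
      mul_nonneg (Real.sqrt_nonneg P) (Real.sqrt_nonneg Q)]
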